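/- arXiv:2112.05064 — 2 statements merged into one kernel-verified Lean document; each statement's English description precedes it below -/
import Mathlib

section
/- For all integers k ≥ 0 and r ≥ 0, the Bernoulli polynomial evaluated at r satisfies B_k(r) = (−1)^k · Σ_{j=0}^{k} ((−1)^j/(j+1)) · {k+1, j+1} · ⟦j+r+1, r+1⟧_r, where {n,k} denotes the Stirling number of the second kind. -/
/-- The `r`-Stirling numbers of the first kind `⟦n,k⟧_r`: `⟦r,r⟧_r = 1`,
`⟦n,k⟧_r = 0` if `n < r` or `k < r`, and
`⟦n,k⟧_r = (n-1)·⟦n-1,k⟧_r + ⟦n-1,k-1⟧_r` for `n > r`. -/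
def rStirling1 (r : ℕ) : ℕ → ℕ → ℕ
  | 0, k => if r = 0 ∧ k = 0 then 1 else 0
  | (n+1), k =>
    if n + 1 < r ∨ k < r then 0
    else if n + 1 = r then (if k = r then 1 else 0)
    else if k = 0 then 0
    else n * rStirling1 r n k + rStirling1 r n (k - 1)

/-- The (unsigned) Stirling numbers of the first kind. -/
def stirling1 : ℕ → ℕ → ℕ := rStirling1 0
/-- The Stirling numbers of the second kind. -/
def stirling2 : ℕ → ℕ → ℕ
  | 0, k => if k = 0 then 1 else 0
  | (_+1), 0 => 0
  | (n+1), (k+1) => (k+1) * stirling2 n (k+1) + stirling2 n k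

/-!
Rising factorials are, up to scalars, antidifferences of shifted rising factorials, and Stirling
numbers of the second kind expand `(-x)ᵏ` in the latter. Hence
`F = ∑ⱼ (-1)ʲ / (j + 1) · {k+1, j+1} · x(x+1)⋯(x+j)` satisfies `F(x+1) - F(x) = (-x)ᵏ`, as does
`(-1)ᵏ B_{k+1} / (k + 1)`. Two polynomials with the same forward difference differ by a constant,
so `B_k = (-1)ᵏ F'`. Finally, the Taylor coefficients of a rising factorial at `r` are the
`r`-Stirling numbers of the first kind, and the derivative `F'(r)` is a Taylor coefficient.
-/

theorem stirling2_eq_stirlingSecond (n k : ℕ) : stirling2 n k = n.stirlingSecond k := by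
  induction n generalizing k with
  | zero => cases k <;> simp [stirling2]
  | succ n ih => cases k <;> simp [stirling2, Nat.stirlingSecond_succ_succ, ih]

section rStirling1

theorem rStirling1_self (r k : ℕ) : rStirling1 r r k = if k = r then 1 else 0 := by
  cases r with
  | zero => simp [rStirling1]
  | succ r => grind [rStirling1]

variable {r n k : ℕ}

theorem rStirling1_eq_zero_of_lt (h : k < r) : rStirling1 r n k = 0 := by
  cases n <;> grind [rStirling1]

theorem rStirling1_succ_succ (h : r ≤ n) :
    rStirling1 r (n + 1) (k + 1) = n * rStirling1 r n (k + 1) + rStirling1 r n k := by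
  by_cases hk : k + 1 < r
  · simp [rStirling1_eq_zero_of_lt hk, rStirling1_eq_zero_of_lt (Nat.lt_of_succ_lt hk)]
  · grind [rStirling1]

theorem rStirling1_succ_self (h : r ≤ n) :
    rStirling1 r (n + 1) r = n * rStirling1 r n r := by
  cases r with
  | zero => cases n <;> simp [rStirling1]
  | succ r =>
    rw [rStirling1_succ_succ h, rStirling1_eq_zero_of_lt (Nat.lt_succ_self r), add_zero]

end rStirling1

section Polynomial

open Polynomial Finset

theorem coeff_taylor_ascPochhammer (R : Type*) [CommSemiring R] (r n k : ℕ) :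
    (taylor (r : R) (ascPochhammer R n)).coeff k = rStirling1 r (n + r) (k + r) := by
  induction n generalizing k with
  | zero => simp [rStirling1_self, coeff_one]
  | succ n ih =>
    have taylor_succ : taylor (r : R) (ascPochhammer R (n + 1)) =
        taylor (r : R) (ascPochhammer R n) * X +
          C ((n + r : ℕ) : R) * taylor (r : R) (ascPochhammer R n) := by
      rw [ascPochhammer_succ_right, taylor_mul, map_add, taylor_X, ← C_eq_natCast, taylor_C,
        Nat.cast_add, C_add]
      ring
    rw [taylor_succ, coeff_add, coeff_C_mul, ih, Nat.add_right_comm n 1 r]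
    cases k with
    | zero => simp [rStirling1_succ_self (Nat.le_add_left r n)]
    | succ k =>
      rw [coeff_mul_X, ih, Nat.add_right_comm k 1 r, rStirling1_succ_succ (Nat.le_add_left r n)]
      push_cast
      ring

theorem eval_derivative_ascPochhammer (R : Type*) [CommSemiring R] (r n : ℕ) :
    (derivative (ascPochhammer R n)).eval (r : R) = rStirling1 r (n + r) (r + 1) := by
  rw [← taylor_coeff_one, coeff_taylor_ascPochhammer, add_comm 1 r]

section CommRing

variable (R : Type*) [CommRing R]

theorem sum_stirlingSecond_mul_ascPochhammer (n : ℕ) :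
    ∑ j ∈ range (n + 1), (-1) ^ j * (n.stirlingSecond j : R[X]) * ascPochhammer R j =
      (-X) ^ n := by
  induction n with
  | zero => simp
  | succ n ih =>
    let f (j : ℕ) : R[X] := (-1) ^ j * (j * n.stirlingSecond j) * ascPochhammer R j
    have shift : ∑ j ∈ range (n + 1), f (j + 1) = ∑ j ∈ range (n + 1), f j := by
      have f_zero : f 0 = 0 := by simp [f]
      have f_last : f (n + 1) = 0 := by
        simp [f, Nat.stirlingSecond_eq_zero_of_lt (Nat.lt_succ_self n)]
      rw [← add_zero (∑ j ∈ range (n + 1), f (j + 1)), ← f_zero, ← sum_range_succ', sum_range_succ,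
        f_last, add_zero]
    calc ∑ j ∈ range (n + 1 + 1),
          (-1) ^ j * ((n + 1).stirlingSecond j : R[X]) * ascPochhammer R j
      _ = ∑ j ∈ range (n + 1), (f (j + 1) -
            (-1) ^ j * (n.stirlingSecond j : R[X]) * ascPochhammer R (j + 1)) := by
        rw [sum_range_succ', Nat.stirlingSecond_succ_zero, Nat.cast_zero, mul_zero, zero_mul,
          add_zero]
        refine sum_congr rfl fun j _ => ?_
        rw [Nat.stirlingSecond_succ_succ]
        push_cast [f]
        ring
      _ = ∑ j ∈ range (n + 1), (f j -
            (-1) ^ j * (n.stirlingSecond j : R[X]) * ascPochhammer R (j + 1)) := by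
        rw [sum_sub_distrib, shift, ← sum_sub_distrib]
      _ = (∑ j ∈ range (n + 1),
            (-1) ^ j * (n.stirlingSecond j : R[X]) * ascPochhammer R j) * -X := by
        rw [sum_mul]
        refine sum_congr rfl fun j _ => ?_
        rw [ascPochhammer_succ_right]
        ring
      _ = (-X) ^ (n + 1) := by rw [ih, pow_succ]

theorem sum_stirlingSecond_succ_mul_ascPochhammer_comp (n : ℕ) :
    ∑ j ∈ range (n + 1), (-1) ^ j * ((n + 1).stirlingSecond (j + 1) : R[X]) *
      (ascPochhammer R j).comp (X + 1) = (-X) ^ n := by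
  apply monic_X.isRegular.left
  have expansion := sum_stirlingSecond_mul_ascPochhammer R (n + 1)
  rw [sum_range_succ', Nat.stirlingSecond_succ_zero, Nat.cast_zero, mul_zero, zero_mul,
    add_zero] at expansion
  calc X * ∑ j ∈ range (n + 1), (-1) ^ j * ((n + 1).stirlingSecond (j + 1) : R[X]) *
        (ascPochhammer R j).comp (X + 1)
    _ = -∑ j ∈ range (n + 1), (-1) ^ (j + 1) * ((n + 1).stirlingSecond (j + 1) : R[X]) *
          ascPochhammer R (j + 1) := by
      rw [mul_sum, ← sum_neg_distrib]
      refine sum_congr rfl fun j _ => ?_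
      rw [ascPochhammer_succ_left]
      ring
    _ = X * (-X) ^ n := by rw [expansion]; ring

end CommRing

section Antidifference

variable {R : Type*} [CommRing R] [IsDomain R] [CharZero R] {p q : R[X]}

theorem eq_C_of_comp_X_add_one_eq_self (h : p.comp (X + 1) = p) : p = C (p.eval 0) := by
  have eval_natCast (n : ℕ) : p.eval (n : R) = p.eval 0 := by
    induction n with
    | zero => simp
    | succ n ih => rw [← ih, ← congrArg (eval (n : R)) h]; simp
  refine eq_of_infinite_eval_eq _ _ ((Set.infinite_range_of_injective
    (Nat.cast_injective (R := R))).mono ?_)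
  rintro _ ⟨n, rfl⟩
  simp [eval_natCast]

theorem derivative_eq_of_comp_X_add_one_sub_eq
    (h : p.comp (X + 1) - p = q.comp (X + 1) - q) : derivative p = derivative q := by
  have periodic : (p - q).comp (X + 1) = p - q := by
    rw [sub_comp]
    linear_combination h
  rw [← sub_eq_zero, ← derivative_sub, eq_C_of_comp_X_add_one_eq_self periodic, derivative_C]

end Antidifference

/-- The polynomial `∑ⱼ (-1)ʲ / (j + 1) · {k+1, j+1} · x(x+1)⋯(x+j)`. In characteristic zero it is an
antidifference of `(-x)ᵏ`; otherwise the division by `j + 1` may take the junk value `0`. -/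
noncomputable def negPowAntidifference (K : Type*) [Field K] (k : ℕ) : K[X] :=
  ∑ j ∈ range (k + 1),
    ((-1 : K) ^ j / (j + 1) * (k + 1).stirlingSecond (j + 1)) • ascPochhammer K (j + 1)

theorem negPowAntidifference_comp_X_add_one_sub (K : Type*) [Field K] [CharZero K] (k : ℕ) :
    (negPowAntidifference K k).comp (X + 1) - negPowAntidifference K k = (-X) ^ k := by
  rw [← sum_stirlingSecond_succ_mul_ascPochhammer_comp, negPowAntidifference,
    Polynomial.sum_comp, ← sum_sub_distrib]
  refine sum_congr rfl fun j _ => ?_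
  have cancel : (-1 : K) ^ j / (j + 1) * (k + 1).stirlingSecond (j + 1) * (j + 1) =
      (-1) ^ j * (k + 1).stirlingSecond (j + 1) := by
    field_simp
  rw [smul_comp, ← smul_sub, ascPochhammer_succ_comp_X_add_one, add_sub_cancel_left,
    ← Nat.cast_smul_eq_nsmul K, smul_smul, Nat.cast_add_one, cancel, smul_eq_C_mul]
  simp

theorem eval_derivative_negPowAntidifference (K : Type*) [Field K] (k r : ℕ) :
    (derivative (negPowAntidifference K k)).eval (r : K) =
      ∑ j ∈ range (k + 1), (-1 : K) ^ j / (j + 1) * (k + 1).stirlingSecond (j + 1) *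
        rStirling1 r (j + r + 1) (r + 1) := by
  simp only [negPowAntidifference, derivative_sum, derivative_smul, eval_finsetSum, eval_smul,
    eval_derivative_ascPochhammer, smul_eq_mul, Nat.add_right_comm _ 1 r]

theorem bernoulli_eq_derivative_negPowAntidifference (k : ℕ) :
    Polynomial.bernoulli k = (-1) ^ k * derivative (negPowAntidifference ℚ k) := by
  have same_difference :
      (Polynomial.bernoulli (k + 1)).comp (X + 1) - Polynomial.bernoulli (k + 1) =
        ((k + 1 : ℚ) • (-1 : ℚ) ^ k • negPowAntidifference ℚ k).comp (X + 1) -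
          (k + 1 : ℚ) • (-1 : ℚ) ^ k • negPowAntidifference ℚ k := by
    rw [smul_comp, smul_comp, ← smul_sub, ← smul_sub, negPowAntidifference_comp_X_add_one_sub,
      add_comm X, bernoulli_comp_one_add_X, add_sub_cancel_left, Nat.add_sub_cancel]
    simp [smul_eq_C_mul, ← mul_pow]
  have derivatives := derivative_eq_of_comp_X_add_one_sub_eq same_difference
  rw [derivative_bernoulli_add_one, derivative_smul, derivative_smul] at derivatives
  have succ_ne_zero : (k + 1 : ℚ[X]) ≠ 0 := Nat.cast_add_one_ne_zero k
  apply mul_left_cancel₀ succ_ne_zero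
  simpa [smul_eq_C_mul] using derivatives

end Polynomial

theorem stmt10 (k r : ℕ) :
    (Polynomial.bernoulli k).eval (r : ℚ) =
      (-1) ^ k * ∑ j ∈ Finset.range (k + 1),
        ((-1 : ℚ) ^ j / (j + 1)) * stirling2 (k + 1) (j + 1) *
          rStirling1 r (j + r + 1) (r + 1) := by
  simp only [stirling2_eq_stirlingSecond]
  rw [bernoulli_eq_derivative_negPowAntidifference, ← eval_derivative_negPowAntidifference]
  simp
end

section
/- For all integers m ≥ 0 and r, s ≥ 0 with r + s ≤ m + 1, Σ_{k=r}^{m+1−s} (r! · s!/(k! · (m+1−k)!)) · ⟦k, r⟧ · ⟦m+1−k, s⟧ = ((r+s)!/(m+1)!) · ⟦m+1, r+s⟧, as an identity of rational numbers. -/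
/-!
Let `F_r` be the exponential generating function of `n ↦ ⟦n, r⟧`, multiplied by `r!`. The recurrence
of the Stirling numbers says `(1 - X) F_{r+1}' = (r + 1) F_r`, and the powers of `-log (1 - X)`
satisfy the same differential recursion, so `F_r = (-log (1 - X)) ^ r`. The identity compares the
coefficients of `X ^ n` in `F_r * F_s = F_{r+s}`.
-/

open Finset PowerSeries

theorem stirling1_eq_stirlingFirst (n k : ℕ) : stirling1 n k = Nat.stirlingFirst n k := by
  unfold stirling1
  induction n generalizing k with
  | zero => cases k <;> simp [rStirling1]
  | succ n ih => cases k <;> simp [rStirling1, Nat.stirlingFirst_succ_succ, ih]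

theorem sum_antidiagonal_eq_sum_Icc {M : Type*} [AddCommMonoid M] (f : ℕ → ℕ → M) (n : ℕ) {r s : ℕ}
    (hr : ∀ i j, i < r → f i j = 0) (hs : ∀ i j, j < s → f i j = 0) :
    ∑ p ∈ antidiagonal n, f p.1 p.2 = ∑ k ∈ Icc r (n - s), f k (n - k) := by
  rw [Finset.Nat.sum_antidiagonal_eq_sum_range_succ f]
  refine (sum_subset (fun k hk ↦ ?_) fun k hk hk' ↦ ?_).symm
  · rw [mem_Icc] at hk
    rw [mem_range]
    omega
  · rw [mem_range] at hk
    rw [mem_Icc, not_and_or, not_le, not_le] at hk'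
    exact hk'.elim (hr _ _) fun h ↦ hs _ _ (by omega)

section

variable (K : Type*) [Field K]

/-- The power series `-log (1 - X) = ∑_{n ≥ 1} X ^ n / n`, the exponential generating function of
cycles. The constant coefficient is `0` because `0⁻¹ = 0`. -/
noncomputable def negLogOneSub : K⟦X⟧ :=
  mk fun n ↦ (n : K)⁻¹

/-- The exponential generating function of `n ↦ ⟦n, r⟧`, multiplied by `r!`; it counts permutations
whose `r` cycles are listed in some order. -/
noncomputable def stirlingFirstSeries (r : ℕ) : K⟦X⟧ :=
  mk fun n ↦ (r.factorial * n.stirlingFirst r : K) / n.factorial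

theorem constantCoeff_negLogOneSub : constantCoeff (negLogOneSub K) = 0 := by
  simp [negLogOneSub, ← coeff_zero_eq_constantCoeff_apply]

theorem stirlingFirstSeries_zero : stirlingFirstSeries K 0 = 1 := by
  ext n
  cases n <;> simp [stirlingFirstSeries, coeff_one]

theorem coeff_stirlingFirstSeries_of_lt {n r : ℕ} (h : n < r) :
    coeff n (stirlingFirstSeries K r) = 0 := by
  simp [stirlingFirstSeries, Nat.stirlingFirst_eq_zero_of_lt h]

theorem constantCoeff_stirlingFirstSeries_succ (r : ℕ) :
    constantCoeff (stirlingFirstSeries K (r + 1)) = 0 := by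
  rw [← coeff_zero_eq_constantCoeff_apply, coeff_stirlingFirstSeries_of_lt K r.succ_pos]

variable [CharZero K]

theorem derivative_negLogOneSub : d⁄dX K (negLogOneSub K) = PowerSeries.mk 1 := by
  ext n
  simp [negLogOneSub, coeff_derivative, Nat.cast_add_one_ne_zero]

theorem coeff_derivative_stirlingFirstSeries_succ (r n : ℕ) :
    coeff n (d⁄dX K (stirlingFirstSeries K (r + 1))) =
      ((r + 1).factorial * (n + 1).stirlingFirst (r + 1) : K) / n.factorial := by
  have hn : (n + 1 : K) ≠ 0 := n.cast_add_one_ne_zero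
  rw [coeff_derivative, stirlingFirstSeries, coeff_mk, n.factorial_succ]
  push_cast
  field_simp

theorem derivative_stirlingFirstSeries_succ_mul_one_sub_X (r : ℕ) :
    d⁄dX K (stirlingFirstSeries K (r + 1)) * (1 - X) =
      (r + 1 : K⟦X⟧) * stirlingFirstSeries K r := by
  have hC : (r + 1 : K⟦X⟧) = C (r + 1 : K) := by simp
  ext n
  rw [mul_one_sub, map_sub, hC, coeff_C_mul, coeff_derivative_stirlingFirstSeries_succ]
  cases n with
  | zero =>
    rw [coeff_zero_mul_X, stirlingFirstSeries, coeff_mk, Nat.stirlingFirst_succ_succ,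
      r.factorial_succ, Nat.factorial_zero]
    push_cast
    ring
  | succ n =>
    have hn : (n + 1 : K) ≠ 0 := n.cast_add_one_ne_zero
    rw [coeff_succ_mul_X, coeff_derivative_stirlingFirstSeries_succ,
      Nat.stirlingFirst_succ_succ (n + 1), stirlingFirstSeries, coeff_mk, n.factorial_succ,
      r.factorial_succ]
    push_cast
    field_simp
    ring

theorem derivative_stirlingFirstSeries_succ (r : ℕ) :
    d⁄dX K (stirlingFirstSeries K (r + 1)) =
      (r + 1 : K⟦X⟧) * stirlingFirstSeries K r * d⁄dX K (negLogOneSub K) := by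
  rw [← derivative_stirlingFirstSeries_succ_mul_one_sub_X, derivative_negLogOneSub, mul_assoc,
    mul_comm (1 - X), mk_one_mul_one_sub_eq_one, mul_one]

theorem stirlingFirstSeries_eq_pow (r : ℕ) : stirlingFirstSeries K r = negLogOneSub K ^ r := by
  induction r with
  | zero => rw [stirlingFirstSeries_zero, pow_zero]
  | succ r ih =>
    refine derivative.ext ?_ ?_
    · rw [derivative_stirlingFirstSeries_succ, ih, derivative_pow, Nat.add_sub_cancel,
        Nat.cast_add_one]
    · rw [constantCoeff_stirlingFirstSeries_succ, map_pow, constantCoeff_negLogOneSub,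
        zero_pow r.succ_ne_zero]

theorem stirlingFirstSeries_add (r s : ℕ) :
    stirlingFirstSeries K (r + s) = stirlingFirstSeries K r * stirlingFirstSeries K s := by
  simp only [stirlingFirstSeries_eq_pow, pow_add]

theorem stmt12_general (n r s : ℕ) :
    ∑ k ∈ Icc r (n - s),
        ((r.factorial * s.factorial : K) / (k.factorial * (n - k).factorial)) *
          stirling1 k r * stirling1 (n - k) s =
      ((r + s).factorial / n.factorial : K) * stirling1 n (r + s) := by
  calc
    _ = ∑ k ∈ Icc r (n - s),
          coeff k (stirlingFirstSeries K r) * coeff (n - k) (stirlingFirstSeries K s) := by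
      refine sum_congr rfl fun k _ ↦ ?_
      simp only [stirlingFirstSeries, coeff_mk, stirling1_eq_stirlingFirst]
      ring
    _ = coeff n (stirlingFirstSeries K r * stirlingFirstSeries K s) := by
      rw [coeff_mul, sum_antidiagonal_eq_sum_Icc
        (fun i j ↦ coeff i (stirlingFirstSeries K r) * coeff j (stirlingFirstSeries K s)) n
        (fun _ _ h ↦ by rw [coeff_stirlingFirstSeries_of_lt K h, zero_mul])
        (fun _ _ h ↦ by rw [coeff_stirlingFirstSeries_of_lt K h, mul_zero])]
    _ = _ := by
      rw [← stirlingFirstSeries_add, stirlingFirstSeries, coeff_mk, stirling1_eq_stirlingFirst]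
      ring

end

theorem stmt12 (m r s : ℕ) (h : r + s ≤ m + 1) :
    ∑ k ∈ Finset.Icc r (m + 1 - s),
        ((r.factorial * s.factorial : ℚ) / (k.factorial * (m + 1 - k).factorial)) *
          stirling1 k r * stirling1 (m + 1 - k) s =
      ((r + s).factorial / (m + 1).factorial : ℚ) * stirling1 (m + 1) (r + s) :=
  stmt12_general ℚ (m + 1) r s
end
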